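/- Let γ ∈ (π/2, π] and C > 0 satisfy 2·C·cos(γ/2) + cos γ ≤ 0 (equivalently F′(0) ≥ 0). Then there is a unique φ* ∈ (π/2, π) with F′(φ*) = 0; moreover F′(φ) > 0 for all φ ∈ (0, φ*) and F′(φ) < 0 for all φ ∈ (φ*, π], so F is strictly increasing on [0, φ*] and strictly decreasing on [φ*, π]. -/

import Mathlib

open Real

/-- Half of the derivative of the total force. -/
noncomputable def halfForceDeriv (γ C φ : ℝ) : ℝ :=
  -cos (φ + γ) + C * (sin ((φ + γ) / 2) * sin φ - 2 * cos ((φ + γ) / 2) * cos φ)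
    + C ^ 2 * sin φ ^ 2

theorem hasDerivAt_totalForce (γ A C φ : ℝ) :
    HasDerivAt (fun φ => -A * C ^ 2 - 2 * sin (φ + γ) - 4 * C * cos ((φ + γ) / 2) * sin φ
      - (1 / 2) * C ^ 2 * sin (2 * φ) + C ^ 2 * φ) (2 * halfForceDeriv γ C φ) φ := by
  have hs : HasDerivAt (fun φ : ℝ => φ + γ) 1 φ := (hasDerivAt_id φ).add_const γ
  have h2 : HasDerivAt (fun φ : ℝ => 2 * φ) (2 * 1) φ := (hasDerivAt_id φ).const_mul 2
  have h := (((((hs.sin.const_mul 2).const_sub (-A * C ^ 2)).sub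
    (((hs.div_const 2).cos.const_mul (4 * C)).mul (hasDerivAt_sin φ))).sub
    (h2.sin.const_mul ((1 / 2) * C ^ 2))).add ((hasDerivAt_id φ).const_mul (C ^ 2)))
  refine h.congr_deriv ?_
  rw [halfForceDeriv, cos_two_mul, sin_sq]
  ring

theorem halfForceDeriv_eq (γ C φ : ℝ) :
    halfForceDeriv γ C φ = (C * sin φ) ^ 2 + C * (sin ((φ + γ) / 2) * sin φ)
      + sin ((φ + γ) / 2) ^ 2 - cos ((φ + γ) / 2) ^ 2
      - 2 * C * (cos ((φ + γ) / 2) * cos φ) := by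
  have h : cos (φ + γ) = cos ((φ + γ) / 2) ^ 2 - sin ((φ + γ) / 2) ^ 2 := by
    rw [← cos_two_mul']; congr 1; ring
  rw [halfForceDeriv, h]
  ring

theorem sin_lt_sin_of_pi_div_two_le {x y : ℝ} (hx : π / 2 ≤ x) (hxy : x < y) (hy : y ≤ π) :
    sin y < sin x := by
  rw [← sin_pi_sub y, ← sin_pi_sub x]
  exact sin_lt_sin_of_lt_of_le_pi_div_two (by linarith [pi_pos]) (by linarith) (by linarith)

theorem halfForceDeriv_strictAntiOn {γ C : ℝ} (hγ : γ ∈ Set.Icc (π / 2) π) (hC : 0 < C) :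
    StrictAntiOn (halfForceDeriv γ C) (Set.Icc (π / 2) π) := by
  rintro x ⟨hx, hx'⟩ y ⟨hy, hy'⟩ hxy
  obtain ⟨hγ₁, hγ₂⟩ := hγ
  have hπ := pi_pos
  have hsin := sin_lt_sin_of_pi_div_two_le hx hxy hy'
  have hsin_half := sin_lt_sin_of_pi_div_two_le (x := (x + γ) / 2) (y := (y + γ) / 2)
    (by linarith) (by linarith) (by linarith)
  have hcos := cos_lt_cos_of_nonneg_of_le_pi (by linarith) hy' hxy
  have hcos_half := cos_lt_cos_of_nonneg_of_le_pi (x := (x + γ) / 2) (y := (y + γ) / 2)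
    (by linarith) (by linarith) (by linarith)
  have hsy : 0 ≤ sin y := sin_nonneg_of_nonneg_of_le_pi (by linarith) hy'
  have hsy_half : 0 ≤ sin ((y + γ) / 2) :=
    sin_nonneg_of_nonneg_of_le_pi (by linarith) (by linarith)
  have hcx : cos x ≤ 0 := cos_nonpos_of_pi_div_two_le_of_le hx (by linarith)
  have hcx_half : cos ((x + γ) / 2) ≤ 0 :=
    cos_nonpos_of_pi_div_two_le_of_le (by linarith) (by linarith)
  have h₁ : (C * sin y) ^ 2 ≤ (C * sin x) ^ 2 := by gcongr
  have h₂ : C * (sin ((y + γ) / 2) * sin y) ≤ C * (sin ((x + γ) / 2) * sin x) := by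
    gcongr; exact hsy_half.trans hsin_half.le
  have h₃ : sin ((y + γ) / 2) ^ 2 < sin ((x + γ) / 2) ^ 2 := by gcongr
  have h₄ : cos ((x + γ) / 2) ^ 2 ≤ cos ((y + γ) / 2) ^ 2 := by nlinarith
  have h₅ : 2 * C * (cos ((x + γ) / 2) * cos x) ≤ 2 * C * (cos ((y + γ) / 2) * cos y) := by
    refine mul_le_mul_of_nonneg_left ?_ (by positivity)
    exact mul_le_mul_of_nonpos_of_nonpos hcos_half.le hcos.le (hcos_half.le.trans hcx_half) hcx
  rw [halfForceDeriv_eq, halfForceDeriv_eq]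
  linarith

theorem halfForceDeriv_pos {γ C φ : ℝ} (hγ : γ ∈ Set.Ioc (π / 2) π) (hC : 0 < C)
    (hcond : 2 * C * cos (γ / 2) + cos γ ≤ 0) (hφ : φ ∈ Set.Ioc 0 (π / 2)) :
    0 < halfForceDeriv γ C φ := by
  obtain ⟨hγ₁, hγ₂⟩ := hγ
  obtain ⟨hφ₁, hφ₂⟩ := hφ
  have hsφ : 0 < sin φ := sin_pos_of_pos_of_lt_pi hφ₁ (by linarith)
  have hcφ : 0 ≤ cos φ := cos_nonneg_of_neg_pi_div_two_le_of_le (by linarith) hφ₂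
  have hs_half : 0 < sin ((φ + γ) / 2) := sin_pos_of_pos_of_lt_pi (by linarith) (by linarith)
  have hsγ : 0 ≤ sin γ := sin_nonneg_of_nonneg_of_le_pi (by linarith) hγ₂
  have hc_half : cos ((φ + γ) / 2) ≤ cos (γ / 2) :=
    cos_le_cos_of_nonneg_of_le_pi (by linarith) (by linarith) (by linarith)
  have h₁ : 2 * C * cos ((φ + γ) / 2) ≤ -cos γ := by
    have := mul_le_mul_of_nonneg_left hc_half (by positivity : 0 ≤ 2 * C)
    linarith
  have h₂ := mul_le_mul_of_nonneg_right h₁ hcφ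
  have h₃ : 0 < C * (sin ((φ + γ) / 2) * sin φ) := by positivity
  have h₄ : 0 ≤ sin φ * sin γ := by positivity
  have h₅ : 0 ≤ C ^ 2 * sin φ ^ 2 := by positivity
  rw [halfForceDeriv, cos_add]
  linarith

theorem halfForceDeriv_pi_neg {γ C : ℝ} (hγ : γ ∈ Set.Ioc (π / 2) π) (hC : 0 < C) :
    halfForceDeriv γ C π < 0 := by
  obtain ⟨hγ₁, hγ₂⟩ := hγ
  have hcγ : cos γ < 0 := cos_neg_of_pi_div_two_lt_of_lt hγ₁ (by linarith)
  have hc_half : cos ((π + γ) / 2) ≤ 0 :=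
    cos_nonpos_of_pi_div_two_le_of_le (by linarith) (by linarith)
  have h := mul_nonpos_of_nonneg_of_nonpos hC.le hc_half
  rw [halfForceDeriv, add_comm π γ, cos_add_pi, cos_pi, sin_pi, add_comm γ π]
  linarith

/-- For `γ ∈ (π/2, π]` and `C > 0` with `2·C·cos(γ/2) + cos γ ≤ 0` (i.e. `F′(0) ≥ 0`), there is
a unique `φ* ∈ (π/2, π)` with `F′(φ*) = 0`; `F′ > 0` on `(0, φ*)`, `F′ < 0` on `(φ*, π]`, so
`F` strictly increases on `[0, φ*]` and strictly decreases on `[φ*, π]`. -/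
theorem total_force_unique_max_obtuse (γ A C : ℝ)
    (hγ : γ ∈ Set.Ioc (Real.pi / 2) Real.pi) (hA : 0 < A) (hC : 0 < C)
    (hcond : 2 * C * Real.cos (γ / 2) + Real.cos γ ≤ 0)
    (F : ℝ → ℝ)
    (hF : F = fun φ => -A * C ^ 2 - 2 * Real.sin (φ + γ)
      - 4 * C * Real.cos ((φ + γ) / 2) * Real.sin φ
      - (1 / 2) * C ^ 2 * Real.sin (2 * φ) + C ^ 2 * φ) :
    ∃ φs : ℝ, φs ∈ Set.Ioo (Real.pi / 2) Real.pi ∧ deriv F φs = 0 ∧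
      (∀ ψ ∈ Set.Ioo (Real.pi / 2) Real.pi, deriv F ψ = 0 → ψ = φs) ∧
      (∀ φ ∈ Set.Ioo (0 : ℝ) φs, 0 < deriv F φ) ∧
      (∀ φ ∈ Set.Ioc φs Real.pi, deriv F φ < 0) ∧
      StrictMonoOn F (Set.Icc 0 φs) ∧
      StrictAntiOn F (Set.Icc φs Real.pi) := by
  have hderiv (φ : ℝ) : HasDerivAt F (2 * halfForceDeriv γ C φ) φ := by
    rw [hF]; exact hasDerivAt_totalForce γ A C φ
  have hanti := halfForceDeriv_strictAntiOn (Set.Ioc_subset_Icc_self hγ) hC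
  have hpos {φ : ℝ} := halfForceDeriv_pos (φ := φ) hγ hC hcond
  have hπ := pi_pos
  have hmid : 0 < halfForceDeriv γ C (π / 2) := hpos ⟨by linarith, le_rfl⟩
  have hcont : Continuous (halfForceDeriv γ C) := by unfold halfForceDeriv; fun_prop
  obtain ⟨φs, hφs, hzero⟩ := intermediate_value_Ioo' (by linarith : π / 2 ≤ π) hcont.continuousOn
    ⟨halfForceDeriv_pi_neg hγ hC, hmid⟩
  have hφs' := Set.Ioo_subset_Icc_self hφs
  have hleft : ∀ φ ∈ Set.Ioo 0 φs, 0 < deriv F φ := by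
    rintro φ ⟨hφ₁, hφ₂⟩
    rw [(hderiv φ).deriv]
    rcases le_or_gt φ (π / 2) with hφ | hφ
    · linarith [hpos ⟨hφ₁, hφ⟩]
    · linarith [hanti ⟨hφ.le, hφ₂.le.trans hφs.2.le⟩ hφs' hφ₂]
  have hright : ∀ φ ∈ Set.Ioc φs π, deriv F φ < 0 := by
    rintro φ ⟨hφ₁, hφ₂⟩
    rw [(hderiv φ).deriv]
    linarith [hanti hφs' ⟨hφs.1.le.trans hφ₁.le, hφ₂⟩ hφ₁]
  have hFcont : Continuous F := continuous_iff_continuousAt.2 fun φ => (hderiv φ).continuousAt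
  refine ⟨φs, hφs, by rw [(hderiv φs).deriv, hzero, mul_zero], fun ψ hψ h => ?_, hleft, hright,
    strictMonoOn_of_deriv_pos (convex_Icc _ _) hFcont.continuousOn ?_,
    strictAntiOn_of_deriv_neg (convex_Icc _ _) hFcont.continuousOn ?_⟩
  · rw [(hderiv ψ).deriv] at h
    exact hanti.injOn (Set.Ioo_subset_Icc_self hψ) hφs' (by linarith)
  · rwa [interior_Icc]
  · rw [interior_Icc]
    exact fun φ hφ => hright φ (Set.Ioo_subset_Ioc_self hφ)
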